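/- arXiv:2105.12986 — 2 statements merged into one kernel-verified Lean document; each statement's English description precedes it below -/
import Mathlib

section
/- Let 𝒫x, 𝒫y, 𝒫z be partitions of Ω with 𝒫x ⊥ 𝒫y | 𝒫z. Then the induced partitions of the set of maximal coherent sets of gambles satisfy At_x ⊥ At_y | At_z; concretely, for all maximal coherent sets M1, M2, M3 on Ω: if there exists a maximal M' with ε_x(M1) = ε_x(M') and ε_z(M3) = ε_z(M'), and there exists a maximal M'' with ε_y(M2) = ε_y(M'') and ε_z(M3) = ε_z(M''), then there exists a maximal M''' with ε_x(M1) = ε_x(M'''), ε_y(M2) = ε_y(M''') and ε_z(M3) = ε_z(M'''). -/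
open Set

universe u

/-- The set of gambles on `Ω`: bounded real-valued functions. -/
def Gmb (Ω : Type u) : Set (Ω → ℝ) := {f | ∃ B : ℝ, ∀ ω, |f ω| ≤ B}

/-- `L⁺(Ω)`: non-negative, non-vanishing gambles. -/
def GmbPos (Ω : Type u) : Set (Ω → ℝ) :=
  {f | f ∈ Gmb Ω ∧ (∀ ω, 0 ≤ f ω) ∧ f ≠ 0}

/-- Coherent set of gambles. -/
def Coherent {Ω : Type u} (D : Set (Ω → ℝ)) : Prop :=
  D ⊆ Gmb Ω ∧ GmbPos Ω ⊆ D ∧ (0 : Ω → ℝ) ∉ D ∧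
    (∀ f ∈ D, ∀ g ∈ D, f + g ∈ D) ∧
    (∀ f ∈ D, ∀ c : ℝ, 0 < c → c • f ∈ D)

/-- Maximal coherent set of gambles: no coherent set properly contains it. -/
def MaxCoh {Ω : Type u} (M : Set (Ω → ℝ)) : Prop :=
  Coherent M ∧ ∀ D : Set (Ω → ℝ), Coherent D → M ⊆ D → D = M

/-- Membership in `Φ(Ω)`: coherent sets together with `L(Ω)`. -/
def PhiMem {Ω : Type u} (D : Set (Ω → ℝ)) : Prop :=
  Coherent D ∨ D = Gmb Ω

/-- The closure operator `C` on sets of gambles. -/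
def Cl {Ω : Type u} (A : Set (Ω → ℝ)) : Set (Ω → ℝ) :=
  ⋂₀ {D | PhiMem D ∧ A ⊆ D}

/-- Order on partitions (as equivalence relations): `ple x y` iff `𝒫x ≤ 𝒫y`,
i.e. `y` refines `x`. -/
def ple {Ω : Type u} (x y : Setoid Ω) : Prop := ∀ a b : Ω, y.r a b → x.r a b

/-- Join of two partitions: the relation is the conjunction. -/
def pjoin {Ω : Type u} (x y : Setoid Ω) : Setoid Ω :=
  ⟨fun a b => x.r a b ∧ y.r a b,
    ⟨fun a => ⟨x.iseqv.refl a, y.iseqv.refl a⟩,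
     fun h => ⟨x.iseqv.symm h.1, y.iseqv.symm h.2⟩,
     fun h h' => ⟨x.iseqv.trans h.1 h'.1, y.iseqv.trans h.2 h'.2⟩⟩⟩

/-- Conditional independence of partitions: blocks are equivalence classes,
`B1 ∩ B ≠ ∅` and `B2 ∩ B ≠ ∅` imply `B1 ∩ B2 ∩ B ≠ ∅`. -/
def CondIndep {Ω : Type u} (p1 p2 p : Setoid Ω) : Prop :=
  ∀ a b c : Ω, (∃ u, p1.r a u ∧ p.r c u) → (∃ v, p2.r b v ∧ p.r c v) →
    ∃ w, p1.r a w ∧ p2.r b w ∧ p.r c w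

/-- Saturation operator of a partition. -/
def sat {Ω : Type u} (x : Setoid Ω) (S : Set Ω) : Set Ω :=
  {ω | ∃ ω' ∈ S, x.r ω ω'}

/-- `L_x`: the `x`-measurable gambles. -/
def Meas {Ω : Type u} (x : Setoid Ω) : Set (Ω → ℝ) :=
  {f | f ∈ Gmb Ω ∧ ∀ a b : Ω, x.r a b → f a = f b}

/-- Extraction operator `ε_x`. -/
def eps {Ω : Type u} (x : Setoid Ω) (D : Set (Ω → ℝ)) : Set (Ω → ℝ) :=
  Cl (D ∩ Meas x)

/-- `At(D)`: maximal coherent sets dominating `D`. -/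
def Atoms {Ω : Type u} (D : Set (Ω → ℝ)) : Set (Set (Ω → ℝ)) :=
  {M | MaxCoh M ∧ D ⊆ M}

/-- `D_S`: the coherent set of gambles associated to a set `S ⊆ Ω`. -/
def DS {Ω : Type u} (S : Set Ω) : Set (Ω → ℝ) :=
  {f | f ∈ Gmb Ω ∧ 0 < sInf (f '' S)} ∪ GmbPos Ω

/-- `posi(K)`: positive linear hull. -/
def posi {Ω : Type u} (K : Set (Ω → ℝ)) : Set (Ω → ℝ) :=
  {g | ∃ r : ℕ, 1 ≤ r ∧ ∃ (lam : Fin r → ℝ) (f : Fin r → (Ω → ℝ)),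
    (∀ j, 0 < lam j) ∧ (∀ j, f j ∈ K) ∧ g = ∑ j, lam j • f j}

theorem gmb_add {Ω : Type u} {f g : Ω → ℝ} (hf : f ∈ Gmb Ω) (hg : g ∈ Gmb Ω) : f + g ∈ Gmb Ω := by
  obtain ⟨A, hA⟩ := hf
  obtain ⟨B, hB⟩ := hg
  exact ⟨A + B, fun w => (abs_add_le _ _).trans (add_le_add (hA w) (hB w))⟩

theorem gmb_smul {Ω : Type u} {f : Ω → ℝ} (hf : f ∈ Gmb Ω) (c : ℝ) : c • f ∈ Gmb Ω := by
  obtain ⟨A, hA⟩ := hf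
  refine ⟨|c| * A, fun w => ?_⟩
  simp only [Pi.smul_apply, smul_eq_mul, abs_mul]
  exact mul_le_mul_of_nonneg_left (hA w) (abs_nonneg c)

theorem gmb_zero {Ω : Type u} : (0 : Ω → ℝ) ∈ Gmb Ω := ⟨0, fun w => by simp⟩

theorem coh_of_cone {Ω : Type u} (K : Set (Ω → ℝ)) (h1 : K ⊆ Gmb Ω) (h2 : GmbPos Ω ⊆ K)
    (ha : ∀ f ∈ K, ∀ g ∈ K, f + g ∈ K) (hs : ∀ f ∈ K, ∀ c : ℝ, 0 < c → c • f ∈ K)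
    (hp : ∀ f ∈ K, ∀ g ∈ K, f + g = 0 → f = 0) : Coherent (K \ {0}) := by
  refine ⟨fun f hf => h1 hf.1, fun f hf => ⟨h2 hf, hf.2.2⟩, fun h => h.2 rfl, ?_, ?_⟩
  · intro f hf g hg
    exact ⟨ha f hf.1 g hg.1, fun h => hf.2 (hp f hf.1 g hg.1 h)⟩
  · intro f hf c hc
    exact ⟨hs f hf.1 c hc, fun h => hf.2 ((smul_eq_zero.1 h).resolve_left hc.ne')⟩

/-- `M` together with zero is a cone. -/
theorem ins_add {Ω : Type u} {M : Set (Ω → ℝ)} (h : Coherent M) {f g : Ω → ℝ}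
    (hf : f ∈ insert 0 M) (hg : g ∈ insert 0 M) : f + g ∈ insert 0 M := by
  rcases hf with rfl | hf
  · simpa using hg
  · rcases hg with rfl | hg
    · right; simpa using hf
    · right; exact h.2.2.2.1 f hf g hg

theorem ins_smul {Ω : Type u} {M : Set (Ω → ℝ)} (h : Coherent M) {f : Ω → ℝ}
    (hf : f ∈ insert 0 M) {c : ℝ} (hc : 0 < c) : c • f ∈ insert 0 M := by
  rcases hf with rfl | hf
  · left; simp
  · right; exact h.2.2.2.2 f hf c hc

theorem ins_pt {Ω : Type u} {M : Set (Ω → ℝ)} (h : Coherent M) {f g : Ω → ℝ}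
    (hf : f ∈ insert 0 M) (hg : g ∈ insert 0 M) (he : f + g = 0) : f = 0 := by
  rcases hf with rfl | hf
  · rfl
  · rcases hg with rfl | hg
    · simpa using he
    · exact absurd (he ▸ h.2.2.2.1 f hf g hg) h.2.2.1

theorem ins_gmb {Ω : Type u} {M : Set (Ω → ℝ)} (h : Coherent M) {f : Ω → ℝ}
    (hf : f ∈ insert 0 M) : f ∈ Gmb Ω := by
  rcases hf with rfl | hf
  · exact gmb_zero
  · exact h.1 hf

theorem up_mem {Ω : Type u} {M : Set (Ω → ℝ)} (h : Coherent M) {f g : Ω → ℝ}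
    (hf : f ∈ M) (hg : g ∈ Gmb Ω) (hfg : ∀ w, f w ≤ g w) : g ∈ M := by
  by_cases he : g - f = 0
  · rw [sub_eq_zero.1 he]; exact hf
  · have : g - f ∈ M := by
      refine h.2.1 ⟨?_, fun w => sub_nonneg.2 (hfg w), he⟩
      have := gmb_add hg (gmb_smul (h.1 hf) (-1))
      simpa [sub_eq_add_neg] using this
    have := h.2.2.2.1 _ this _ hf
    simpa using this

theorem max_dich {Ω : Type u} {M : Set (Ω → ℝ)} (h : MaxCoh M) {f : Ω → ℝ}
    (hf : f ∈ Gmb Ω) (h0 : f ≠ 0) (hn : -f ∉ M) : f ∈ M := by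
  have hc := h.1
  have key : Coherent ({d : Ω → ℝ | ∃ m ∈ insert 0 M, ∃ c : ℝ, 0 ≤ c ∧ d = m + c • f} \ {0}) := by
    apply coh_of_cone
    · rintro d ⟨m, hm, c, -, rfl⟩
      exact gmb_add (ins_gmb hc hm) (gmb_smul hf c)
    · intro d hd
      exact ⟨d, Or.inr (hc.2.1 hd), 0, le_rfl, by simp⟩
    · rintro _ ⟨m, hm, c, h0, rfl⟩ _ ⟨m', hm', c', h0', rfl⟩
      exact ⟨m + m', ins_add hc hm hm', c + c', by positivity, by rw [add_smul]; abel⟩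
    · rintro _ ⟨m, hm, c, h0, rfl⟩ a ha
      exact ⟨a • m, ins_smul hc hm ha, a * c, by positivity, by rw [smul_add, smul_smul]⟩
    · rintro _ ⟨m, hm, c, hc0, rfl⟩ _ ⟨m', hm', c', hc0', rfl⟩ he
      have he' : (m + m') + (c + c') • f = 0 := by rw [← he, add_smul]; abel
      rcases (add_nonneg hc0 hc0').eq_or_lt with hz | hpos
      · have e1 : c = 0 := by linarith
        have e2 : c' = 0 := by linarith
        subst e1 e2
        have : m = 0 := ins_pt hc hm hm' (by simpa using he')
        simp [this]
      · exfalso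
        have h3 : -f = (c + c')⁻¹ • (m + m') := by
          rw [eq_neg_of_add_eq_zero_left he', smul_neg, smul_smul, inv_mul_cancel₀ hpos.ne', one_smul]
        have h4 := ins_smul hc (ins_add hc hm hm') (inv_pos.2 hpos)
        rw [← h3] at h4
        rcases h4 with h4 | h4
        · exact h0 (neg_eq_zero.1 h4)
        · exact hn h4
  have := h.2 _ key (fun m hm => ⟨⟨m, Or.inr hm, 0, le_rfl, by simp⟩,
    fun e => hc.2.2.1 (by rw [← show m = 0 from e]; exact hm)⟩)
  rw [← this]
  exact ⟨⟨0, Or.inl rfl, 1, zero_le_one, by simp⟩, h0⟩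

theorem exists_max {Ω : Type u} {D : Set (Ω → ℝ)} (h : Coherent D) :
    ∃ M, MaxCoh M ∧ D ⊆ M := by
  obtain ⟨M, hDM, hM⟩ := zorn_subset_nonempty {D : Set (Ω → ℝ) | Coherent D} (by
    intro c hc hch hne
    refine ⟨⋃₀ c, ?_, fun s hs => subset_sUnion_of_mem hs⟩
    obtain ⟨s0, hs0⟩ := hne
    refine ⟨sUnion_subset fun s hs => (hc hs).1,
      fun f hf => ⟨s0, hs0, (hc hs0).2.1 hf⟩, ?_, ?_, ?_⟩
    · rintro ⟨s, hs, h⟩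
      exact (hc hs).2.2.1 h
    · rintro f ⟨s, hs, hf⟩ g ⟨t, ht, hg⟩
      rcases hch.total hs ht with hst | hst
      · exact ⟨t, ht, (hc ht).2.2.2.1 f (hst hf) g hg⟩
      · exact ⟨s, hs, (hc hs).2.2.2.1 f hf g (hst hg)⟩
    · rintro f ⟨s, hs, hf⟩ a ha
      exact ⟨s, hs, (hc hs).2.2.2.2 f hf a ha⟩) D h
  exact ⟨M, ⟨hM.prop, fun E hE hME => (hM.eq_of_subset hE hME).symm⟩, hDM⟩

theorem eps_inter {Ω : Type u} (x : Setoid Ω) {D : Set (Ω → ℝ)} (h : Coherent D) :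
    eps x D ∩ Meas x = D ∩ Meas x := by
  ext f
  constructor
  · rintro ⟨h1, h2⟩
    exact ⟨h1 D ⟨Or.inl h, inter_subset_left⟩, h2⟩
  · rintro ⟨h1, h2⟩
    exact ⟨fun E hE => hE.2 ⟨h1, h2⟩, h2⟩

theorem inter_of_eps {Ω : Type u} (x : Setoid Ω) {D E : Set (Ω → ℝ)} (h : Coherent D)
    (h' : Coherent E) (he : eps x D = eps x E) : D ∩ Meas x = E ∩ Meas x := by
  rw [← eps_inter x h, he, eps_inter x h']

theorem meas_neg {Ω : Type u} {x : Setoid Ω} {f : Ω → ℝ} (h : f ∈ Meas x) : -f ∈ Meas x := by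
  refine ⟨by simpa using gmb_smul h.1 (-1), fun a b hab => ?_⟩
  simp [h.2 a b hab]

theorem eps_eq_of_sub {Ω : Type u} (x : Setoid Ω) {M N : Set (Ω → ℝ)} (h : MaxCoh M)
    (h' : Coherent N) (hs : M ∩ Meas x ⊆ N) : eps x M = eps x N := by
  have : M ∩ Meas x = N ∩ Meas x := by
    refine Subset.antisymm (fun f hf => ⟨hs hf, hf.2⟩) ?_
    rintro f ⟨hf, hm⟩
    refine ⟨max_dich h hm.1 (fun e => h'.2.2.1 (e ▸ hf)) (fun hn => ?_), hm⟩
    have := h'.2.2.2.1 _ hf _ (hs ⟨hn, meas_neg hm⟩)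
    rw [add_neg_cancel] at this
    exact h'.2.2.1 this
  unfold eps
  rw [this]

/-- upper envelope along the blocks of `z` -/
noncomputable def env {Ω : Type u} (z : Setoid Ω) (f : Ω → ℝ) : Ω → ℝ :=
  fun w => sSup (f '' {v | z.r w v})

theorem env_bdd {Ω : Type u} (z : Setoid Ω) {f : Ω → ℝ} (hf : f ∈ Gmb Ω) (w : Ω) :
    BddAbove (f '' {v | z.r w v}) := by
  obtain ⟨B, hB⟩ := hf
  refine ⟨B, ?_⟩
  rintro _ ⟨v, -, rfl⟩
  exact (le_abs_self _).trans (hB v)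

theorem env_le {Ω : Type u} (z : Setoid Ω) {f : Ω → ℝ} (hf : f ∈ Gmb Ω) (w : Ω) :
    f w ≤ env z f w :=
  le_csSup (env_bdd z hf w) ⟨w, z.iseqv.refl w, rfl⟩

theorem env_sup_le {Ω : Type u} (z : Setoid Ω) {f : Ω → ℝ} (w : Ω) (c : ℝ)
    (hc : ∀ v, z.r w v → f v ≤ c) : env z f w ≤ c := by
  refine csSup_le ⟨f w, w, z.iseqv.refl w, rfl⟩ ?_
  rintro _ ⟨v, hv, rfl⟩
  exact hc v hv

theorem env_meas {Ω : Type u} (z : Setoid Ω) {f : Ω → ℝ} (hf : f ∈ Gmb Ω) :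
    env z f ∈ Meas z := by
  constructor
  · obtain ⟨B, hB⟩ := id hf
    refine ⟨B, fun w => abs_le.2 ⟨?_, ?_⟩⟩
    · exact (abs_le.1 (hB w)).1.trans (env_le z hf w)
    · exact env_sup_le z w B fun v _ => (abs_le.1 (hB v)).2
  · intro a b hab
    unfold env
    have : {v | z.r a v} = {v | z.r b v} := by
      ext v
      exact ⟨fun h => z.iseqv.trans (z.iseqv.symm hab) h, fun h => z.iseqv.trans hab h⟩
    rw [this]

theorem env_ins {Ω : Type u} (z : Setoid Ω) {M N : Set (Ω → ℝ)} (hM : Coherent M)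
    (he : M ∩ Meas z ⊆ N) {f : Ω → ℝ} (hf : f ∈ insert 0 M) :
    env z f ∈ insert 0 N ∧ (env z f = 0 → f = 0) := by
  rcases hf with rfl | hf
  · refine ⟨Or.inl ?_, fun _ => rfl⟩
    funext w
    exact le_antisymm (env_sup_le z w 0 fun _ _ => le_rfl) (env_le z gmb_zero w)
  · have hm := env_meas z (hM.1 hf)
    have h1 : env z f ∈ M := up_mem hM hf hm.1 (env_le z (hM.1 hf))
    exact ⟨Or.inr (he ⟨h1, hm⟩), fun e => absurd (e ▸ h1) hM.2.2.1⟩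

theorem ins_nonpos {Ω : Type u} {M : Set (Ω → ℝ)} (h : Coherent M) {f : Ω → ℝ}
    (hf : f ∈ insert 0 M) (hn : ∀ w, f w ≤ 0) : f = 0 := by
  rcases hf with rfl | hf
  · rfl
  · exact absurd (up_mem h hf gmb_zero hn) h.2.2.1

theorem main_zero {Ω : Type u} (x y z : Setoid Ω) (h : CondIndep x y z)
    {M1 M2 M3 : Set (Ω → ℝ)} (h1 : Coherent M1) (h2 : Coherent M2) (h3 : Coherent M3)
    (e1 : M1 ∩ Meas z ⊆ M3) (e2 : M2 ∩ Meas z ⊆ M3) {f g k : Ω → ℝ}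
    (hf : f ∈ insert 0 M1) (hg : g ∈ insert 0 M2) (hk : k ∈ insert 0 M3)
    (fx : f ∈ Meas x) (gy : g ∈ Meas y) (kz : k ∈ Meas z)
    (hle : ∀ w, f w + g w + k w ≤ 0) : f = 0 ∧ g = 0 ∧ k = 0 := by
  obtain ⟨F1, F2⟩ := env_ins z h1 e1 hf
  obtain ⟨G1, G2⟩ := env_ins z h2 e2 hg
  have hs : ∀ w, env z f w + env z g w + k w ≤ 0 := by
    intro c
    have : env z f c ≤ - env z g c - k c := by
      refine env_sup_le z c _ fun u hu => ?_
      have : env z g c ≤ - f u - k c := by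
        refine env_sup_le z c _ fun v hv => ?_
        obtain ⟨w, hw1, hw2, hw3⟩ := h u v c ⟨u, x.iseqv.refl u, hu⟩ ⟨v, y.iseqv.refl v, hv⟩
        have := hle w
        rw [← fx.2 _ _ hw1, ← gy.2 _ _ hw2, ← kz.2 _ _ hw3] at this
        linarith
      linarith
    linarith
  have hFG := ins_add h3 F1 G1
  have hz : env z f + env z g + k = 0 := ins_nonpos h3 (ins_add h3 hFG hk) hs
  have hFG0 := ins_pt h3 hFG hk hz
  have hF0 := ins_pt h3 F1 G1 hFG0
  rw [hFG0, zero_add] at hz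
  rw [hF0, zero_add] at hFG0
  exact ⟨F2 hF0, G2 hFG0, hz⟩

theorem meas_add {Ω : Type u} {x : Setoid Ω} {f g : Ω → ℝ} (h : f ∈ Meas x) (h' : g ∈ Meas x) :
    f + g ∈ Meas x :=
  ⟨gmb_add h.1 h'.1, fun a b hab => by simp [h.2 a b hab, h'.2 a b hab]⟩

theorem meas_smul {Ω : Type u} {x : Setoid Ω} {f : Ω → ℝ} (h : f ∈ Meas x) (c : ℝ) :
    c • f ∈ Meas x :=
  ⟨gmb_smul h.1 c, fun a b hab => by simp [h.2 a b hab]⟩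

theorem meas_zero {Ω : Type u} {x : Setoid Ω} : (0 : Ω → ℝ) ∈ Meas x :=
  ⟨gmb_zero, fun _ _ _ => rfl⟩

theorem main_coh {Ω : Type u} (x y z : Setoid Ω) (h : CondIndep x y z)
    {M1 M2 M3 : Set (Ω → ℝ)} (h1 : Coherent M1) (h2 : Coherent M2) (h3 : Coherent M3)
    (e1 : M1 ∩ Meas z ⊆ M3) (e2 : M2 ∩ Meas z ⊆ M3) :
    Coherent ({d : Ω → ℝ | d ∈ Gmb Ω ∧ ∃ f g k : Ω → ℝ, (f ∈ insert 0 M1 ∧ f ∈ Meas x) ∧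
      (g ∈ insert 0 M2 ∧ g ∈ Meas y) ∧ (k ∈ insert 0 M3 ∧ k ∈ Meas z) ∧
      ∀ w, f w + g w + k w ≤ d w} \ {0}) := by
  apply coh_of_cone
  · exact fun d hd => hd.1
  · intro d hd
    exact ⟨hd.1, 0, 0, 0, ⟨Or.inl rfl, meas_zero⟩, ⟨Or.inl rfl, meas_zero⟩,
      ⟨Or.inl rfl, meas_zero⟩, fun w => by simpa using hd.2.1 w⟩
  · rintro d ⟨hd, f, g, k, hf, hg, hk, hle⟩ d' ⟨hd', f', g', k', hf', hg', hk', hle'⟩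
    refine ⟨gmb_add hd hd', f + f', g + g', k + k', ⟨ins_add h1 hf.1 hf'.1, meas_add hf.2 hf'.2⟩,
      ⟨ins_add h2 hg.1 hg'.1, meas_add hg.2 hg'.2⟩,
      ⟨ins_add h3 hk.1 hk'.1, meas_add hk.2 hk'.2⟩, fun w => ?_⟩
    simp only [Pi.add_apply]
    linarith [hle w, hle' w]
  · rintro d ⟨hd, f, g, k, hf, hg, hk, hle⟩ c hc
    refine ⟨gmb_smul hd c, c • f, c • g, c • k, ⟨ins_smul h1 hf.1 hc, meas_smul hf.2 c⟩,
      ⟨ins_smul h2 hg.1 hc, meas_smul hg.2 c⟩,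
      ⟨ins_smul h3 hk.1 hc, meas_smul hk.2 c⟩, fun w => ?_⟩
    simp only [Pi.smul_apply, smul_eq_mul]
    have := mul_le_mul_of_nonneg_left (hle w) hc.le
    linarith
  · rintro d ⟨hd, f, g, k, hf, hg, hk, hle⟩ d' ⟨hd', f', g', k', hf', hg', hk', hle'⟩ he
    have he' : ∀ w, d w + d' w = 0 := fun w => congrFun he w
    obtain ⟨a, b, c⟩ := main_zero x y z h h1 h2 h3 e1 e2 (ins_add h1 hf.1 hf'.1)
      (ins_add h2 hg.1 hg'.1) (ins_add h3 hk.1 hk'.1) (meas_add hf.2 hf'.2)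
      (meas_add hg.2 hg'.2) (meas_add hk.2 hk'.2) (fun w => by
        simp only [Pi.add_apply]
        linarith [hle w, hle' w, he' w])
    have a1 := ins_pt h1 hf.1 hf'.1 a
    have b1 := ins_pt h2 hg.1 hg'.1 b
    have c1 := ins_pt h3 hk.1 hk'.1 c
    subst a1 b1 c1
    rw [zero_add] at a b c
    subst a b c
    funext w
    have p := hle w
    have q := hle' w
    have r := he' w
    simp only [Pi.zero_apply] at p q ⊢
    linarith

theorem stmt7 {Ω : Type u} [Nonempty Ω] (x y z : Setoid Ω) (h : CondIndep x y z)
    (M1 M2 M3 : Set (Ω → ℝ)) (h1 : MaxCoh M1) (h2 : MaxCoh M2) (h3 : MaxCoh M3)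
    (hxz : ∃ M' : Set (Ω → ℝ), MaxCoh M' ∧ eps x M1 = eps x M' ∧ eps z M3 = eps z M')
    (hyz : ∃ M'' : Set (Ω → ℝ), MaxCoh M'' ∧ eps y M2 = eps y M'' ∧ eps z M3 = eps z M'') :
    ∃ M''' : Set (Ω → ℝ), MaxCoh M''' ∧ eps x M1 = eps x M''' ∧
      eps y M2 = eps y M''' ∧ eps z M3 = eps z M''' := by
  obtain ⟨N1, n1, ex, ez⟩ := hxz
  obtain ⟨N2, n2, ey, ez'⟩ := hyz
  have e1 : N1 ∩ Meas z ⊆ M3 := by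
    rw [← inter_of_eps z h3.1 n1.1 ez]; exact inter_subset_left
  have e2 : N2 ∩ Meas z ⊆ M3 := by
    rw [← inter_of_eps z h3.1 n2.1 ez']; exact inter_subset_left
  obtain ⟨M, hM, hsub⟩ := exists_max (main_coh x y z h n1.1 n2.1 h3.1 e1 e2)
  refine ⟨M, hM, ?_, ?_, ?_⟩
  · rw [ex]
    refine eps_eq_of_sub x n1 hM.1 fun f hf => hsub ⟨⟨hf.2.1, f, 0, 0, ⟨Or.inr hf.1, hf.2⟩,
      ⟨Or.inl rfl, meas_zero⟩, ⟨Or.inl rfl, meas_zero⟩, fun w => by simp⟩, fun e => ?_⟩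
    exact n1.1.2.2.1 (by rw [← show f = 0 from e]; exact hf.1)
  · rw [ey]
    refine eps_eq_of_sub y n2 hM.1 fun f hf => hsub ⟨⟨hf.2.1, 0, f, 0, ⟨Or.inl rfl, meas_zero⟩,
      ⟨Or.inr hf.1, hf.2⟩, ⟨Or.inl rfl, meas_zero⟩, fun w => by simp⟩, fun e => ?_⟩
    exact n2.1.2.2.1 (by rw [← show f = 0 from e]; exact hf.1)
  · refine eps_eq_of_sub z h3 hM.1 fun f hf => hsub ⟨⟨hf.2.1, 0, 0, f, ⟨Or.inl rfl, meas_zero⟩,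
      ⟨Or.inl rfl, meas_zero⟩, ⟨Or.inr hf.1, hf.2⟩, fun w => by simp⟩, fun e => ?_⟩
    exact h3.1.2.2.1 (by rw [← show f = 0 from e]; exact hf.1)
end

section
/- Let 𝒫x be a partition of Ω and D ∈ Φ(Ω). Then At(ε_x(D)) = σ_x(At(D)); concretely, a maximal coherent set M satisfies ε_x(D) ⊆ M if and only if there exists a maximal coherent set M' with D ⊆ M' and ε_x(M) = ε_x(M'). -/
open Set

universe u

/-- Saturation operator on sets of atoms (maximal coherent sets). -/
def satA {Ω : Type u} (x : Setoid Ω) (A : Set (Set (Ω → ℝ))) : Set (Set (Ω → ℝ)) :=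
  {M | MaxCoh M ∧ ∃ M' ∈ A, eps x M = eps x M'}

theorem aux_add {Ω : Type u} {D K : Set (Ω → ℝ)} (hD : Coherent D) (hK : K ⊆ Gmb Ω)
    (hadd : ∀ f ∈ K, ∀ g ∈ K, f + g ∈ K) (hsm : ∀ f ∈ K, ∀ c : ℝ, 0 < c → c • f ∈ K)
    (h0 : (0 : Ω → ℝ) ∉ K) (h1 : ∀ d ∈ D, ∀ k ∈ K, d + k ≠ 0) :
    ∃ E : Set (Ω → ℝ), Coherent E ∧ D ⊆ E ∧ K ⊆ E := by
  obtain ⟨a, b, c, d, e⟩ := hD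
  refine ⟨{g | g ∈ D ∨ g ∈ K ∨ ∃ p ∈ D, ∃ k ∈ K, g = p + k}, ⟨?_, ?_, ?_, ?_, ?_⟩, ?_, ?_⟩
  · rintro g (h | h | ⟨p, hp, k, hk, rfl⟩)
    · exact a h
    · exact hK h
    · obtain ⟨B, hB⟩ := a hp
      obtain ⟨B', hB'⟩ := hK hk
      exact ⟨B + B', fun ω => (abs_add_le _ _).trans (add_le_add (hB ω) (hB' ω))⟩
  · exact fun g hg => Or.inl (b hg)
  · rintro (h | h | ⟨p, hp, k, hk, h⟩)
    · exact c h
    · exact h0 h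
    · exact h1 p hp k hk h.symm
  · rintro f (h | h | ⟨p, hp, k, hk, rfl⟩) g (h' | h' | ⟨p', hp', k', hk', rfl⟩)
    · exact Or.inl (d _ h _ h')
    · exact Or.inr (Or.inr ⟨f, h, g, h', rfl⟩)
    · exact Or.inr (Or.inr ⟨f + p', d _ h _ hp', k', hk', by abel⟩)
    · exact Or.inr (Or.inr ⟨g, h', f, h, by abel⟩)
    · exact Or.inr (Or.inl (hadd _ h _ h'))
    · exact Or.inr (Or.inr ⟨p', hp', f + k', hadd _ h _ hk', by abel⟩)
    · exact Or.inr (Or.inr ⟨p + g, d _ hp _ h', k, hk, by abel⟩)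
    · exact Or.inr (Or.inr ⟨p, hp, k + g, hadd _ hk _ h', by abel⟩)
    · exact Or.inr (Or.inr ⟨p + p', d _ hp _ hp', k + k', hadd _ hk _ hk', by abel⟩)
  · rintro f (h | h | ⟨p, hp, k, hk, rfl⟩) r hr
    · exact Or.inl (e _ h _ hr)
    · exact Or.inr (Or.inl (hsm _ h _ hr))
    · exact Or.inr (Or.inr ⟨r • p, e _ hp _ hr, r • k, hsm _ hk _ hr, smul_add _ _ _⟩)
  · exact fun g hg => Or.inl hg
  · exact fun g hg => Or.inr (Or.inl hg)

theorem aux_neg {Ω : Type u} {M : Set (Ω → ℝ)} (hM : MaxCoh M) {f : Ω → ℝ} (hf : f ∈ Gmb Ω)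
    (hf0 : f ≠ 0) (hfM : f ∉ M) : -f ∈ M := by
  by_contra hn
  obtain ⟨B, hB⟩ := hf
  obtain ⟨E, hE, h1, h2⟩ := aux_add (K := {g | ∃ c : ℝ, 0 < c ∧ g = c • f}) hM.1
    (by
      rintro g ⟨c, hc, rfl⟩
      refine ⟨c * B, fun ω => ?_⟩
      simp only [Pi.smul_apply, smul_eq_mul, abs_mul, abs_of_pos hc]
      exact mul_le_mul_of_nonneg_left (hB ω) hc.le)
    (by
      rintro _ ⟨c, hc, rfl⟩ _ ⟨c', hc', rfl⟩
      exact ⟨c + c', add_pos hc hc', (add_smul _ _ _).symm⟩)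
    (by
      rintro _ ⟨c, hc, rfl⟩ r hr
      exact ⟨r * c, mul_pos hr hc, smul_smul _ _ _⟩)
    (by
      rintro ⟨c, hc, h⟩
      exact (smul_ne_zero hc.ne' hf0) h.symm)
    (by
      rintro m hm _ ⟨c, hc, rfl⟩ h
      apply hn
      have h3 := hM.1.2.2.2.2 m hm c⁻¹ (inv_pos.2 hc)
      rw [eq_neg_of_add_eq_zero_left h, smul_neg, inv_smul_smul₀ hc.ne'] at h3
      exact h3)
  apply hfM
  rw [← hM.2 E hE h1]
  exact h2 ⟨1, one_pos, (one_smul _ _).symm⟩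

theorem aux_max {Ω : Type u} {D : Set (Ω → ℝ)} (hD : Coherent D) :
    ∃ M, MaxCoh M ∧ D ⊆ M := by
  obtain ⟨M, hDM, hM⟩ := zorn_subset_nonempty {E : Set (Ω → ℝ) | Coherent E} (by
    intro c hc hch hne
    obtain ⟨E0, hE0⟩ := hne
    refine ⟨⋃₀ c, ⟨?_, ?_, ?_, ?_, ?_⟩, fun s hs => subset_sUnion_of_mem hs⟩
    · exact sUnion_subset fun s hs => (hc hs).1
    · exact fun g hg => ⟨E0, hE0, (hc hE0).2.1 hg⟩
    · rintro ⟨s, hs, h⟩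
      exact (hc hs).2.2.1 h
    · rintro f ⟨s, hs, h⟩ g ⟨t, ht, h'⟩
      rcases hch.total hs ht with hst | hst
      · exact ⟨t, ht, (hc ht).2.2.2.1 _ (hst h) _ h'⟩
      · exact ⟨s, hs, (hc hs).2.2.2.1 _ h _ (hst h')⟩
    · rintro f ⟨s, hs, h⟩ r hr
      exact ⟨s, hs, (hc hs).2.2.2.2 _ h _ hr⟩) D hD
  exact ⟨M, ⟨hM.prop, fun E hE h => (hM.eq_of_subset hE h).symm⟩, hDM⟩

theorem stmt16 {Ω : Type u} [Nonempty Ω] (x : Setoid Ω) (D : Set (Ω → ℝ))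
    (hD : PhiMem D) :
    Atoms (eps x D) = satA x (Atoms D) := by
  have hcl : ∀ (A M : Set (Ω → ℝ)), Coherent M → A ⊆ M → Cl A ⊆ M :=
    fun A M hM h => sInter_subset_of_mem ⟨Or.inl hM, h⟩
  have hsub : ∀ A : Set (Ω → ℝ), A ⊆ Cl A := fun A => subset_sInter fun s hs => hs.2
  have hz : (0 : Ω → ℝ) ∈ Gmb Ω := ⟨0, fun ω => by simp⟩
  ext M
  constructor
  · rintro ⟨hM, hDM⟩
    have hDM' : D ∩ Meas x ⊆ M := (hsub _).trans hDM
    rcases hD with hD | rfl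
    swap
    · exact absurd (hDM' ⟨hz, hz, fun _ _ _ => rfl⟩) hM.1.2.2.1
    obtain ⟨E, hE, h1, h2⟩ := aux_add (K := M ∩ Meas x) hD (fun f hf => hf.2.1)
      (by
        rintro f ⟨hf, -, hf'⟩ g ⟨hg, -, hg'⟩
        have := hM.1.2.2.2.1 f hf g hg
        exact ⟨this, hM.1.1 this, fun a b h => by simp [hf' a b h, hg' a b h]⟩)
      (by
        rintro f ⟨hf, -, hf'⟩ c hc
        have := hM.1.2.2.2.2 f hf c hc
        exact ⟨this, hM.1.1 this, fun a b h => by simp [hf' a b h]⟩)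
      (fun h => hM.1.2.2.1 h.1)
      (by
        rintro d hd k ⟨hk, -, hk'⟩ h
        have hdM : d ∈ M := hDM' ⟨hd, hD.1 hd, fun a b hab => by
          rw [eq_neg_of_add_eq_zero_left h]; simp [hk' a b hab]⟩
        exact hM.1.2.2.1 (h ▸ hM.1.2.2.2.1 d hdM k hk))
    obtain ⟨M', hM', hEM⟩ := aux_max hE
    refine ⟨hM, M', ⟨hM', h1.trans hEM⟩, ?_⟩
    have : M ∩ Meas x = M' ∩ Meas x := by
      apply Subset.antisymm
      · exact fun f hf => ⟨hEM (h2 hf), hf.2⟩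
      · rintro f ⟨hf, hfx⟩
        refine ⟨?_, hfx⟩
        by_contra hfM
        have hf0 : f ≠ 0 := by
          rintro rfl
          exact hM'.1.2.2.1 hf
        have hn := aux_neg hM hfx.1 hf0 hfM
        have hn' : -f ∈ M' := hEM (h2 ⟨hn, hM.1.1 hn, fun a b h => by simp [hfx.2 a b h]⟩)
        have := hM'.1.2.2.2.1 _ hf _ hn'
        rw [add_neg_cancel] at this
        exact hM'.1.2.2.1 this
    unfold eps
    rw [this]
  · rintro ⟨hM, M', ⟨hM', hDM⟩, he⟩
    refine ⟨hM, hcl _ _ hM.1 ?_⟩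
    have h1 : D ∩ Meas x ⊆ eps x M' := fun f hf => hsub _ ⟨hDM hf.1, hf.2⟩
    rw [← he] at h1
    exact h1.trans (hcl _ _ hM.1 inter_subset_left)
end
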